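/- Define M : ℕ → ℕ → ℕ recursively by M(0, n) = n - 1 and M(k+1, n) = (n - 1) · (1 + M(k, n - 1)). Then for all natural numbers k and all n ≥ 1, M(k, n) ≤ n^(k+1). That is, the message complexity of the Oral Messaging algorithm OM(f) on N participants is O(N^(f+1)). -/

import Mathlib

/-- Message count of the Oral Messaging algorithm `OM(k)` with `n` participants:
the commander sends to the other `n - 1` participants, each of whom runs
`OM(k-1)` among the remaining `n - 1` participants. -/
def omMessages : ℕ → ℕ → ℕ
  | 0, n => n - 1
  | k + 1, n => (n - 1) * (1 + omMessages k (n - 1))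

theorem omMessages_succ_succ (k m : ℕ) :
    omMessages (k + 1) (m + 1) = m * (1 + omMessages k m) := rfl

/- The recursive call has one participant fewer, so its bound has base one less than `m`; this slack
absorbs the `1 +` of the recursion. -/
theorem omMessages_succ_le_pow (k m : ℕ) : omMessages k (m + 1) ≤ m ^ (k + 1) := by
  induction k generalizing m with
  | zero => simp [omMessages]
  | succ k ih =>
    cases m with
    | zero => simp [omMessages_succ_succ]
    | succ m =>
      have one_add_pow_le : 1 + m ^ (k + 1) ≤ (m + 1) ^ (k + 1) := by
        simpa [add_comm] using pow_add_pow_le m.zero_le zero_le_one k.succ_ne_zero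
      calc omMessages (k + 1) (m + 1 + 1)
          = (m + 1) * (1 + omMessages k (m + 1)) := omMessages_succ_succ k (m + 1)
        _ ≤ (m + 1) * (1 + m ^ (k + 1)) := by gcongr; exact ih m
        _ ≤ (m + 1) * (m + 1) ^ (k + 1) := by gcongr
        _ = (m + 1) ^ (k + 1 + 1) := (pow_succ' _ _).symm

/-- The Oral Messaging algorithm `OM(f)` on `N` participants has message
complexity `O(N^(f+1))`: `M(k, n) ≤ n^(k+1)` for all `k` and all `n ≥ 1`. -/
theorem omMessages_le_pow : ∀ (k n : ℕ), 1 ≤ n → omMessages k n ≤ n ^ (k + 1) := by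
  intro k n hn
  obtain ⟨m, rfl⟩ := Nat.exists_eq_add_of_le' hn
  calc omMessages k (m + 1)
      ≤ m ^ (k + 1) := omMessages_succ_le_pow k m
    _ ≤ (m + 1) ^ (k + 1) := Nat.pow_le_pow_left m.le_succ (k + 1)
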